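/- Let w ∈ W and let w' = π_{J,δ}(w) ∈ W^J. Then there exists x ∈ W_{I(J,w',δ)} such that w →_{J,δ} w' x. -/

import Mathlib

open CoxeterSystem

variable {B : Type*} [Finite B] {W : Type*} [Group W] {M : CoxeterMatrix B}

namespace PartialConjugation

/-- The standard parabolic subgroup `W_J` of `W`, generated by the simple
reflections indexed by `J`. -/
def parab (cs : CoxeterSystem M W) (J : Set B) : Subgroup W :=
  Subgroup.closure (cs.simple '' J)

/-- The simple reflection `s_j` (for `j ∈ J`), viewed as an element of `W_J`. -/
def sJ (cs : CoxeterSystem M W) (J : Set B) (j : B) (hj : j ∈ J) : parab cs J :=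
  ⟨cs.simple j, Subgroup.subset_closure ⟨j, hj, rfl⟩⟩

/-- `w ∈ W^J`: `w` is a minimal length representative of its left coset `w W_J`. -/
def IsMinRep (cs : CoxeterSystem M W) (J : Set B) (w : W) : Prop :=
  ∀ v ∈ parab cs J, cs.length w ≤ cs.length (w * v)

variable (cs : CoxeterSystem M W) (J J' : Set B) (δ : parab cs J ≃* parab cs J')

/-- `δ` carries the set of simple reflections indexed by `J` onto the set of
simple reflections indexed by `J'`. -/
def MapsSimples : Prop :=
  (∀ j, ∀ hj : j ∈ J, ∃ j' ∈ J', (δ (sJ cs J j hj) : W) = cs.simple j') ∧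
  (∀ j' ∈ J', ∃ j, ∃ hj : j ∈ J, (δ (sJ cs J j hj) : W) = cs.simple j')

/-- `K` is a `w`-special subset of `J`. -/
def WSpecial (w : W) (K : Set B) : Prop :=
  K ⊆ J ∧ ∀ k ∈ K, ∃ j, ∃ hjJ : j ∈ J, j ∈ K ∧
    w * cs.simple k * w⁻¹ = (δ (sJ cs J j hjJ) : W)

/-- The set `I(J, w, δ)`: the union of all `w`-special subsets of `J`. -/
def Iset (w : W) : Set B := ⋃₀ {K | WSpecial cs J J' δ w K}

/-- The set `W_J ·_δ V = {δ(u) v u⁻¹ : u ∈ W_J, v ∈ V}`. -/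
def orbSet (V : Set W) : Set W :=
  {x | ∃ u : parab cs J, ∃ v ∈ V, x = (δ u : W) * v * (u : W)⁻¹}

/-- The orbit of `x` under the `δ`-twisted partial conjugation action of `W_J`. -/
def orbitOf (x : W) : Set W := orbSet cs J J' δ {x}

/-- The coset `w W_{I(J,w,δ)}`. -/
def coset (w : W) : Set W :=
  {x | ∃ v ∈ parab cs (Iset cs J J' δ w), x = w * v}

/-- Elementary step `v →_i v'` of `δ`-twisted conjugation: `v' = δ(s_i) v s_i`
with `i ∈ J` and `ℓ(v') ≤ ℓ(v)`. -/
def StepRel (v v' : W) : Prop :=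
  ∃ i, ∃ hi : i ∈ J, v' = (δ (sJ cs J i hi) : W) * v * cs.simple i ∧
    cs.length v' ≤ cs.length v

/-- The relation `v →_{J,δ} v'`. -/
def ToRel : W → W → Prop := Relation.ReflTransGen (StepRel cs J J' δ)

/-- The relation `v ≈_{J,δ} v'`. -/
def Approx (v v' : W) : Prop := ToRel cs J J' δ v v' ∧ ToRel cs J J' δ v' v

/-- The Bruhat order on `W`. -/
def bruhatLE (cs : CoxeterSystem M W) : W → W → Prop :=
  Relation.ReflTransGen
    (fun a b => ∃ t, cs.IsReflection t ∧ b = a * t ∧ cs.length a < cs.length b)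

/-- The set of minimal length elements in the orbit of `x`. -/
def orbMin (x : W) : Set W :=
  {y ∈ orbitOf cs J J' δ x | ∀ z ∈ orbitOf cs J J' δ x, cs.length y ≤ cs.length z}


/-! ### The exchange property -/

open Classical in
/-- The generator of the action on `W × ZMod 2` used to prove the exchange property. -/
noncomputable def gen (i : B) : Function.End (W × ZMod 2) := fun p =>
  (cs.simple i * p.1 * cs.simple i, p.2 + if p.1 = cs.simple i then 1 else 0)

lemma ind_eq {a b c d : W} (h : a = b ↔ c = d) [Decidable (a = b)] [Decidable (c = d)] :
    (if a = b then (1 : ZMod 2) else 0) = if c = d then 1 else 0 := by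
  by_cases hab : a = b
  · rw [if_pos hab, if_pos (h.1 hab)]
  · rw [if_neg hab, if_neg (fun hc => hab (h.2 hc))]

lemma end_mul {X : Type*} (f g : Function.End X) (p : X) : (f * g) p = f (g p) := rfl

lemma end_one {X : Type*} (p : X) : (1 : Function.End X) p = p := rfl

open Classical in
lemma gen_mul_pow (i j : B) (n : ℕ) (p : W × ZMod 2) :
    ((gen cs i * gen cs j) ^ n) p =
      ((cs.simple i * cs.simple j) ^ n * p.1 * ((cs.simple i * cs.simple j) ^ n)⁻¹,
       p.2 + ∑ k ∈ Finset.range (2 * n),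
        if p.1 = cs.simple j * (cs.simple i * cs.simple j) ^ k then 1 else 0) := by
  set r := cs.simple i * cs.simple j with hr
  have hrinv : r⁻¹ = cs.simple j * cs.simple i := by simp [hr]
  have hsr : ∀ k : ℕ, (r ^ k)⁻¹ * cs.simple j = cs.simple j * r ^ k := by
    intro k
    induction k with
    | zero => simp
    | succ k ih =>
      rw [pow_succ, mul_inv_rev, mul_assoc, ih, hrinv, ← pow_succ, pow_succ' r k]
      simp only [hr, mul_assoc]
  induction n with
  | zero => simp [end_one]
  | succ n ih =>
    rw [pow_succ', end_mul, ih]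
    rw [end_mul]
    have h2 : 2 * (n + 1) = 2 * n + 1 + 1 := by ring
    rw [h2, Finset.sum_range_succ, Finset.sum_range_succ]
    unfold gen
    ext
    · simp only [pow_succ', mul_inv_rev, hrinv]
      simp only [hr, mul_assoc]
    · simp only []
      simp only [add_assoc]
      congr 2
      congr 1
      · apply ind_eq
        rw [two_mul, pow_add, ← mul_assoc, ← hsr, mul_inv_eq_iff_eq_mul, mul_assoc,
          eq_inv_mul_iff_mul_eq]
      · apply ind_eq
        have h3 : cs.simple j * r ^ (2 * n + 1) =
            (r ^ n)⁻¹ * (cs.simple j * cs.simple i * cs.simple j) * r ^ n := by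
          have : cs.simple j * cs.simple i * cs.simple j = cs.simple j * r := by
            rw [hr, mul_assoc]
          rw [this, ← mul_assoc, hsr, show 2 * n + 1 = n + 1 + n by ring, pow_add, pow_add, pow_one]
          simp only [mul_assoc]
        rw [h3]
        constructor
        · intro h; rw [← h]; simp [mul_assoc]
        · intro h; rw [h]; simp [mul_assoc]

lemma gen_liftable : M.IsLiftable (gen cs) := by
  classical
  intro i j
  funext p
  rw [gen_mul_pow]
  rw [cs.simple_mul_simple_pow, two_mul, Finset.sum_range_add]
  have h : ∀ k : ℕ, (cs.simple i * cs.simple j) ^ (M i j + k) =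
      (cs.simple i * cs.simple j) ^ k := by
    intro k
    rw [pow_add, cs.simple_mul_simple_pow, one_mul]
  have e : ∀ c a b : ZMod 2, a = b → c + (a + b) = c := by
    rintro c a b rfl
    rw [CharTwo.add_self_eq_zero, add_zero]
  rw [e]
  · simp [end_one]
  · apply Finset.sum_congr rfl
    intro k _
    apply ind_eq
    rw [h]

/-- The action on `W × ZMod 2`. -/
noncomputable def act : W →* Function.End (W × ZMod 2) := cs.lift ⟨gen cs, gen_liftable cs⟩

open Classical in
lemma act_wordProd (ω : List B) (p : W × ZMod 2) :
    act cs (cs.wordProd ω) p =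
      (cs.wordProd ω * p.1 * (cs.wordProd ω)⁻¹, p.2 + ((cs.rightInvSeq ω).count p.1 : ZMod 2)) := by
  induction ω with
  | nil => simp [end_one]
  | cons i ω ih =>
    rw [cs.wordProd_cons, map_mul, end_mul, ih]
    rw [act, cs.lift_apply_simple, gen]
    simp only [rightInvSeq, List.count_cons, mul_inv_rev, cs.inv_simple, mul_assoc]
    ext
    · simp
    · simp only [Nat.cast_add, add_assoc, Nat.cast_ite, Nat.cast_one, Nat.cast_zero, beq_iff_eq]
      congr 2
      apply ind_eq
      constructor
      · intro h; rw [← h]; simp [mul_assoc]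
      · intro h; rw [← h]; simp [mul_assoc]

/-- The exchange property. -/
lemma exchange (ω : List B) (i : B)
    (h : cs.length (cs.wordProd ω * cs.simple i) < cs.length (cs.wordProd ω)) :
    ∃ j < ω.length, cs.wordProd ω * cs.simple i = cs.wordProd (ω.eraseIdx j) := by
  classical
  obtain ⟨η, hη, hη'⟩ := cs.exists_isReduced (cs.wordProd ω * cs.simple i)
  have hw : cs.wordProd ω = cs.wordProd (η.concat i) := by
    rw [cs.wordProd_concat, ← hη']; simp
  have hred : cs.IsReduced (η.concat i) := by
    unfold CoxeterSystem.IsReduced at *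
    have h1 := cs.length_wordProd_le (η.concat i)
    rw [← hw] at h1 ⊢
    rw [hη', hη] at h
    simp only [List.length_concat] at h1 ⊢
    omega
  have hnd := hred.nodup_rightInvSeq
  have hmem : cs.simple i ∈ cs.rightInvSeq (η.concat i) := by
    rw [cs.rightInvSeq_concat]; simp
  have e1 := act_wordProd cs ω (cs.simple i, 0)
  have e2 := act_wordProd cs (η.concat i) (cs.simple i, 0)
  rw [← hw, e1] at e2
  have e3 := congrArg Prod.snd e2
  simp only [List.count_eq_one_of_mem hnd hmem, zero_add, Nat.cast_one] at e3
  have hmem' : cs.simple i ∈ cs.rightInvSeq ω := by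
    by_contra hc
    rw [List.count_eq_zero_of_not_mem hc] at e3
    simp at e3
  obtain ⟨j, hj, hje⟩ := List.mem_iff_getElem.mp hmem'
  refine ⟨j, by simpa using hj, ?_⟩
  rw [← cs.wordProd_mul_getD_rightInvSeq, List.getD_eq_getElem _ _ hj, hje]

/-! ### Minimal coset representatives -/

lemma parab_word {J : Set B} {b : W} (hb : b ∈ parab cs J) :
    ∃ ω : List B, (∀ i ∈ ω, i ∈ J) ∧ b = cs.wordProd ω := by
  unfold parab at hb
  induction hb using Subgroup.closure_induction with
  | mem x hx =>
    obtain ⟨j, hj, rfl⟩ := hx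
    exact ⟨[j], by simpa using hj, by simp⟩
  | one => exact ⟨[], by simp, by simp⟩
  | mul x y _ _ ihx ihy =>
    obtain ⟨ω, h1, rfl⟩ := ihx
    obtain ⟨η, h2, rfl⟩ := ihy
    refine ⟨ω ++ η, ?_, by rw [cs.wordProd_append]⟩
    intro i hi
    rcases List.mem_append.1 hi with h | h
    · exact h1 i h
    · exact h2 i h
  | inv x _ ih =>
    obtain ⟨ω, h1, rfl⟩ := ih
    exact ⟨ω.reverse, by simpa using h1, by simp⟩

lemma simple_mem {J : Set B} {i : B} (hi : i ∈ J) : cs.simple i ∈ parab cs J :=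
  Subgroup.subset_closure ⟨i, hi, rfl⟩

lemma word_mem {J : Set B} {ω : List B} (h : ∀ i ∈ ω, i ∈ J) : cs.wordProd ω ∈ parab cs J := by
  induction ω with
  | nil => simp
  | cons i ω ih =>
    rw [cs.wordProd_cons]
    exact Subgroup.mul_mem _ (simple_mem cs (h i (by simp))) (ih fun j hj => h j (by simp [hj]))

/-- `ω` is a shortest word in `J` for its product. -/
def JMin (J : Set B) (ω : List B) : Prop :=
  (∀ i ∈ ω, i ∈ J) ∧ ∀ η : List B, (∀ i ∈ η, i ∈ J) → cs.wordProd η = cs.wordProd ω →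
    ω.length ≤ η.length

lemma exists_JMin {J : Set B} {b : W} (hb : b ∈ parab cs J) :
    ∃ ω, JMin cs J ω ∧ b = cs.wordProd ω := by
  classical
  have h : ∃ n, ∃ ω : List B, ω.length = n ∧ (∀ i ∈ ω, i ∈ J) ∧ b = cs.wordProd ω := by
    obtain ⟨ω, h⟩ := parab_word cs hb
    exact ⟨_, ω, rfl, h⟩
  obtain ⟨ω, h1, h2, h3⟩ := Nat.find_spec h
  refine ⟨ω, ⟨h2, ?_⟩, h3⟩
  intro η h4 h5
  rw [h1]
  exact Nat.find_min' h ⟨η, rfl, h4, by rw [h5, h3]⟩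

lemma JMin_length {J : Set B} {y : W} (hy : IsMinRep cs J y) (ω : List B) (hω : JMin cs J ω) :
    cs.length (y * cs.wordProd ω) = cs.length y + ω.length := by
  induction ω using List.reverseRecOn with
  | nil => simp
  | append_singleton ω i ih =>
    have hωJ : ∀ j ∈ ω, j ∈ J := fun j hj => hω.1 j (by simp [hj])
    have hiJ : i ∈ J := hω.1 i (by simp)
    have hm : JMin cs J ω := by
      refine ⟨hωJ, ?_⟩
      intro η h1 h2
      have := hω.2 (η ++ [i]) (by
        intro j hj
        rcases List.mem_append.1 hj with h | h
        · exact h1 j h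
        · simp at h; exact h ▸ hiJ) (by simp [cs.wordProd_append, h2])
      simpa using this
    have ih := ih hm
    obtain ⟨η, hη, hyη⟩ := cs.exists_isReduced y
    have hηl : cs.length y = η.length := by rw [hyη]; exact hη
    rcases cs.length_mul_simple (y * cs.wordProd ω) i with h | h
    · simp [cs.wordProd_append, ← mul_assoc]
      omega
    · exfalso
      have hlt : cs.length (cs.wordProd (η ++ ω) * cs.simple i) <
          cs.length (cs.wordProd (η ++ ω)) := by
        rw [cs.wordProd_append, ← hyη]; omega
      obtain ⟨j, hj, hje⟩ := exchange cs _ i hlt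
      by_cases hjη : j < η.length
      · rw [List.eraseIdx_append_of_lt_length hjη, cs.wordProd_append, cs.wordProd_append,
          ← hyη] at hje
        have h1 := hy (cs.wordProd ω * cs.simple i * (cs.wordProd ω)⁻¹)
          (Subgroup.mul_mem _ (Subgroup.mul_mem _ (word_mem cs hωJ) (simple_mem cs hiJ))
            (Subgroup.inv_mem _ (word_mem cs hωJ)))
        have h2 : y * (cs.wordProd ω * cs.simple i * (cs.wordProd ω)⁻¹) =
            cs.wordProd (η.eraseIdx j) := by
          rw [← mul_assoc, ← mul_assoc, hje]; simp
        have h3 := cs.length_wordProd_le (η.eraseIdx j)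
        rw [h2] at h1
        have h4 := List.length_eraseIdx_add_one hjη
        omega
      · push Not at hjη
        rw [List.eraseIdx_append_of_length_le hjη, cs.wordProd_append, cs.wordProd_append,
          mul_assoc, mul_right_inj] at hje
        have h1 := hω.2 (ω.eraseIdx (j - η.length))
          (fun k hk => hωJ k (List.mem_of_mem_eraseIdx hk))
          (by rw [← hje]; simp [cs.wordProd_append])
        have h2 := List.length_eraseIdx_le ω (j - η.length)
        simp at h1
        omega

lemma one_isMinRep (J : Set B) : IsMinRep cs J 1 := by
  intro v _
  simp

lemma JMin_len {J : Set B} {ω : List B} (hω : JMin cs J ω) :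
    cs.length (cs.wordProd ω) = ω.length := by
  simpa using JMin_length cs (one_isMinRep cs J) ω hω

lemma length_mul_parab {J : Set B} {y b : W} (hy : IsMinRep cs J y) (hb : b ∈ parab cs J) :
    cs.length (y * b) = cs.length y + cs.length b := by
  obtain ⟨ω, h, rfl⟩ := exists_JMin cs hb
  rw [JMin_length cs hy ω h, JMin_len cs h]

lemma reduced_word {J : Set B} {b : W} (hb : b ∈ parab cs J) :
    ∃ ω : List B, (∀ i ∈ ω, i ∈ J) ∧ b = cs.wordProd ω ∧ ω.length = cs.length b := by
  obtain ⟨ω, h, rfl⟩ := exists_JMin cs hb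
  exact ⟨ω, h.1, rfl, (JMin_len cs h).symm⟩

lemma exists_decomp (J : Set B) (w : W) :
    ∃ y b, IsMinRep cs J y ∧ b ∈ parab cs J ∧ w = y * b := by
  classical
  have h : ∃ n, ∃ v ∈ parab cs J, cs.length (w * v) = n := ⟨_, 1, Subgroup.one_mem _, rfl⟩
  obtain ⟨v, hv, hn⟩ := Nat.find_spec h
  refine ⟨w * v, v⁻¹, ?_, Subgroup.inv_mem _ hv, by simp⟩
  intro u hu
  rw [hn]
  exact Nat.find_min' h ⟨v * u, Subgroup.mul_mem _ hv hu, by rw [mul_assoc]⟩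

lemma minRep_unique {J : Set B} {y z b : W} (hy : IsMinRep cs J y) (hz : IsMinRep cs J z)
    (hb : b ∈ parab cs J) (h : z = y * b) : z = y := by
  have h1 := length_mul_parab cs hy hb
  have h2 := hz b⁻¹ (Subgroup.inv_mem _ hb)
  rw [h] at h2
  simp only [mul_inv_cancel_right] at h2
  have h3 : cs.length b = 0 := by omega
  rw [cs.length_eq_zero_iff] at h3
  simp [h, h3]

lemma deodhar {J : Set B} {y : W} (hy : IsMinRep cs J y) (i : B) :
    IsMinRep cs J (cs.simple i * y) ∨ ∃ k ∈ J, cs.simple i * y = y * cs.simple k := by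
  obtain ⟨z, b, hz, hb, hzb⟩ := exists_decomp cs J (cs.simple i * y)
  obtain ⟨ω, hω, hbω, hl⟩ := reduced_word cs hb
  rcases List.eq_nil_or_concat ω with rfl | ⟨η, k, rfl⟩
  · left
    rw [hzb, hbω]; simpa using hz
  right
  have hk : k ∈ J := hω k (by simp)
  have hη : ∀ j ∈ η, j ∈ J := fun j hj => hω j (by simp [hj])
  refine ⟨k, hk, ?_⟩
  have e1 : cs.simple i * y * cs.simple k = z * cs.wordProd η := by
    rw [hzb, hbω]; simp [cs.wordProd_append, mul_assoc]
  have l1 := length_mul_parab cs hz hb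
  rw [← hzb] at l1
  have l2 := length_mul_parab cs hz (word_mem cs hη)
  rw [← e1] at l2
  have l3 := cs.length_wordProd_le η
  have l4 := hy _ (simple_mem cs hk)
  have l5 := cs.length_mul_simple_ne y k
  have hlt : cs.length (cs.simple i * y * cs.simple k) < cs.length (cs.simple i * y) := by
    simp at hl; omega
  obtain ⟨ξ, hξ, hyξ⟩ := cs.exists_isReduced y
  have hξl : cs.length y = ξ.length := by rw [hyξ]; exact hξ
  have e2 : cs.simple i * y = cs.wordProd (i :: ξ) := by rw [cs.wordProd_cons, ← hyξ]
  rw [e2] at hlt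
  obtain ⟨j, hj, hje⟩ := exchange cs _ k hlt
  rcases j with _ | j
  · rw [← e2] at hje
    simp only [List.eraseIdx_zero, List.tail_cons, ← hyξ] at hje
    have h5 := congrArg (· * cs.simple k) hje
    simpa using h5
  · exfalso
    simp only [List.length_cons, add_lt_add_iff_right] at hj
    rw [List.eraseIdx_cons_succ, cs.wordProd_cons, cs.wordProd_cons, mul_assoc, mul_right_inj,
      ← hyξ] at hje
    have h3 := cs.length_wordProd_le (ξ.eraseIdx j)
    have h4 := List.length_eraseIdx_add_one hj
    rw [hje] at l4
    omega

lemma word_act {J : Set B} {y : W} (hy : IsMinRep cs J y) (ω : List B) :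
    ∃ z p, IsMinRep cs J z ∧ p ∈ parab cs J ∧ cs.wordProd ω * y = z * p ∧
      cs.length p ≤ ω.length ∧ (cs.length p = ω.length → z = y) := by
  induction ω with
  | nil => exact ⟨y, 1, hy, Subgroup.one_mem _, by simp, by simp, fun _ => rfl⟩
  | cons i ω ih =>
    obtain ⟨z, p, hz, hp, e, hle, heq⟩ := ih
    rcases deodhar cs hz i with h | ⟨k, hk, h⟩
    · refine ⟨_, p, h, hp, by rw [cs.wordProd_cons, mul_assoc, e, mul_assoc], ?_, ?_⟩
      · simp; omega
      · intro hc; simp at hc; omega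
    · have hl := cs.length_simple_mul p k
      refine ⟨z, cs.simple k * p, hz, Subgroup.mul_mem _ (simple_mem cs hk) hp, ?_, ?_, ?_⟩
      · rw [cs.wordProd_cons, mul_assoc, e, ← mul_assoc, h, mul_assoc]
      · simp; omega
      · intro hc
        simp only [List.length_cons] at hc
        exact heq (by omega)

/-! ### Special subsets -/

lemma rel_surj {X : Type*} {T : Set X} (hT : T.Finite) (R : X → X → Prop)
    (h1 : ∀ x ∈ T, ∃ y ∈ T, R x y) (h2 : ∀ x ∈ T, ∀ x' ∈ T, ∀ y, R x y → R x' y → x = x') :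
    ∀ y ∈ T, ∃ x ∈ T, R x y := by
  choose g hg hR using h1
  have : Finite T := hT
  let f : T → T := fun x => ⟨g x.1 x.2, hg x.1 x.2⟩
  have hf : Function.Injective f := by
    intro x x' h
    have h3 : g x.1 x.2 = g x'.1 x'.2 := congrArg Subtype.val h
    have h4 := hR x.1 x.2
    rw [h3] at h4
    exact Subtype.ext (h2 _ x.2 _ x'.2 _ h4 (hR x'.1 x'.2))
  intro y hy
  obtain ⟨x, hx⟩ := Finite.surjective_of_injective hf ⟨y, hy⟩
  refine ⟨x.1, x.2, ?_⟩
  have h3 : g x.1 x.2 = y := congrArg Subtype.val hx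
  rw [← h3]
  exact hR x.1 x.2

lemma Iset_special (w : W) : WSpecial cs J J' δ w (Iset cs J J' δ w) := by
  constructor
  · rintro k ⟨K, hK, hk⟩
    exact hK.1 hk
  · rintro k ⟨K, hK, hk⟩
    obtain ⟨j, hj, hjK, e⟩ := hK.2 k hk
    exact ⟨j, hj, ⟨K, hK, hjK⟩, e⟩

lemma Iset_rev (w : W) (j : B) (hj : j ∈ Iset cs J J' δ w) (hjJ : j ∈ J) :
    ∃ k ∈ Iset cs J J' δ w, w * cs.simple k * w⁻¹ = (δ (sJ cs J j hjJ) : W) := by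
  have hS := Iset_special cs J J' δ w
  obtain ⟨x, ⟨k, hk, rfl⟩, hy, e⟩ := rel_surj
    (T := cs.simple '' (Iset cs J J' δ w)) (Set.toFinite _)
    (fun x y => ∃ hy : y ∈ parab cs J, w * x * w⁻¹ = (δ ⟨y, hy⟩ : W))
    (by
      rintro x ⟨k, hk, rfl⟩
      obtain ⟨j, hj, hjI, e⟩ := hS.2 k hk
      exact ⟨_, ⟨j, hjI, rfl⟩, simple_mem cs hj, e⟩)
    (by
      rintro x - x' - y ⟨_, h1⟩ ⟨_, h2⟩
      rw [← h2] at h1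
      simpa using h1)
    (cs.simple j) ⟨j, hj, rfl⟩
  exact ⟨k, hk, e⟩

lemma Iset_conj_word (w : W) (ω : List B) (hω : ∀ i ∈ ω, i ∈ Iset cs J J' δ w)
    (h : cs.wordProd ω ∈ parab cs J) :
    w⁻¹ * (δ ⟨cs.wordProd ω, h⟩ : W) * w ∈ parab cs (Iset cs J J' δ w) := by
  have hS := Iset_special cs J J' δ w
  induction ω with
  | nil =>
    have e : (⟨cs.wordProd [], h⟩ : parab cs J) = 1 := Subtype.ext (by simp)
    rw [e]; simp
  | cons i ω ih =>
    have hi : i ∈ Iset cs J J' δ w := hω i (by simp)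
    have hω' : ∀ i ∈ ω, i ∈ Iset cs J J' δ w := fun j hj => hω j (by simp [hj])
    have h' : cs.wordProd ω ∈ parab cs J := word_mem cs fun j hj => hS.1 (hω' j hj)
    have e : (⟨cs.wordProd (i :: ω), h⟩ : parab cs J) =
        sJ cs J i (hS.1 hi) * ⟨cs.wordProd ω, h'⟩ := Subtype.ext (by simp [cs.wordProd_cons, sJ])
    obtain ⟨k, hk, ek⟩ := Iset_rev cs J J' δ w i hi (hS.1 hi)
    rw [e, map_mul, Subgroup.coe_mul, ← ek]
    have e2 : w⁻¹ * (w * cs.simple k * w⁻¹ * (δ ⟨cs.wordProd ω, h'⟩ : W)) * w =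
        cs.simple k * (w⁻¹ * (δ ⟨cs.wordProd ω, h'⟩ : W) * w) := by group
    rw [e2]
    exact Subgroup.mul_mem _ (simple_mem cs hk) (ih hω' h')

lemma Iset_conj (w v : W) (hv : v ∈ parab cs (Iset cs J J' δ w)) :
    ∃ hJ : v ∈ parab cs J, ∃ v' ∈ parab cs (Iset cs J J' δ w),
      (δ ⟨v, hJ⟩ : W) * w = w * v' := by
  obtain ⟨ω, hω, rfl⟩ := parab_word cs hv
  have hJ : cs.wordProd ω ∈ parab cs J :=
    word_mem cs fun j hj => (Iset_special cs J J' δ w).1 (hω j hj)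
  exact ⟨hJ, _, Iset_conj_word cs J J' δ w ω hω hJ, by group⟩

lemma delta_word (hδ : MapsSimples cs J J' δ) (η : List B) (hη : ∀ i ∈ η, i ∈ J)
    (h : cs.wordProd η ∈ parab cs J) :
    ∃ ω : List B, ω.length = η.length ∧ (δ ⟨cs.wordProd η, h⟩ : W) = cs.wordProd ω := by
  induction η with
  | nil =>
    have e : (⟨cs.wordProd [], h⟩ : parab cs J) = 1 := Subtype.ext (by simp)
    exact ⟨[], rfl, by rw [e]; simp⟩
  | cons i ω ih =>
    have hi : i ∈ J := hη i (by simp)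
    have hω' : ∀ i ∈ ω, i ∈ J := fun j hj => hη j (by simp [hj])
    have h' : cs.wordProd ω ∈ parab cs J := word_mem cs hω'
    have e : (⟨cs.wordProd (i :: ω), h⟩ : parab cs J) =
        sJ cs J i hi * ⟨cs.wordProd ω, h'⟩ := Subtype.ext (by simp [cs.wordProd_cons, sJ])
    obtain ⟨ξ, hl, he⟩ := ih hω' h'
    obtain ⟨j, _, hj⟩ := hδ.1 i hi
    exact ⟨j :: ξ, by simp [hl], by rw [e, map_mul, Subgroup.coe_mul, hj, he, cs.wordProd_cons]⟩

lemma delta_word' (hδ : MapsSimples cs J J' δ) (u : parab cs J) :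
    ∃ ω : List B, ω.length = cs.length (u : W) ∧ (δ u : W) = cs.wordProd ω := by
  obtain ⟨u, hu⟩ := u
  obtain ⟨η, h1, rfl, h3⟩ := reduced_word cs hu
  obtain ⟨ω, h4, h5⟩ := delta_word cs J J' δ hδ η h1 hu
  exact ⟨ω, by rw [h4, h3], h5⟩

lemma parab_mono {I J : Set B} (h : I ⊆ J) : parab cs I ≤ parab cs J :=
  Subgroup.closure_mono (Set.image_mono h)

/-! ### Uniqueness -/

lemma key (hδ : MapsSimples cs J J' δ) {w₁ w₂ : W} (h₁ : IsMinRep cs J w₁)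
    (h₂ : IsMinRep cs J w₂) {I₁ I₂ : Set B} (hI₁ : I₁ ⊆ J) (hI₂ : I₂ ⊆ J)
    (u : parab cs J) {x₁ x₂ : W} (hx₁ : x₁ ∈ parab cs I₁) (hx₂ : x₂ ∈ parab cs I₂)
    (e : (δ u : W) * w₁ * x₁ = w₂ * x₂ * u)
    (hu₁ : IsMinRep cs I₁ (u : W)) (hu₂ : IsMinRep cs I₂ (u : W)⁻¹) :
    cs.length w₁ ≤ cs.length w₂ ∧ (cs.length w₂ ≤ cs.length w₁ → w₂ = w₁) := by
  have hx₁J := parab_mono cs hI₁ hx₁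
  have hx₂J := parab_mono cs hI₂ hx₂
  obtain ⟨ω, hl, hω⟩ := delta_word' cs J J' δ hδ u
  obtain ⟨z, p, hz, hp, ez, hle, heq⟩ := word_act cs h₁ ω
  rw [← hω] at ez
  have hz2 : z = w₂ := by
    refine minRep_unique cs h₂ hz (b := x₂ * u * x₁⁻¹ * p⁻¹) ?_ ?_
    · exact Subgroup.mul_mem _ (Subgroup.mul_mem _ (Subgroup.mul_mem _ hx₂J u.2)
        (Subgroup.inv_mem _ hx₁J)) (Subgroup.inv_mem _ hp)
    · simp only [← mul_assoc]
      rw [← e, ez]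
      simp
  subst hz2
  have hδl : cs.length (δ u : W) ≤ cs.length (u : W) := by
    rw [hω, ← hl]; exact cs.length_wordProd_le ω
  -- lengths
  have a1 : cs.length (z * x₂ * u) = cs.length z + cs.length x₂ + cs.length (u : W) := by
    rw [mul_assoc, length_mul_parab cs h₂ (Subgroup.mul_mem _ hx₂J u.2)]
    have := length_mul_parab cs hu₂ (Subgroup.inv_mem _ hx₂)
    rw [← mul_inv_rev, cs.length_inv, cs.length_inv, cs.length_inv] at this
    omega
  have a2 : cs.length (w₁ * x₁ * (u : W)⁻¹) =
      cs.length w₁ + cs.length x₁ + cs.length (u : W) := by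
    rw [mul_assoc, length_mul_parab cs h₁ (Subgroup.mul_mem _ hx₁J (Subgroup.inv_mem _ u.2))]
    have := length_mul_parab cs hu₁ (Subgroup.inv_mem _ hx₁)
    rw [← cs.length_inv, mul_inv_rev, inv_inv, cs.length_inv] at this
    omega
  have e2 : w₁ * x₁ * (u : W)⁻¹ = (δ u : W)⁻¹ * (z * x₂) := by
    rw [mul_inv_eq_iff_eq_mul, mul_assoc, ← e]
    simp [mul_assoc]
  have a3 := cs.length_mul_le ((δ u : W)⁻¹) (z * x₂)
  rw [← e2, a2, cs.length_inv] at a3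
  have a4 := cs.length_mul_le z x₂
  rw [← e] at a1
  have a5 := cs.length_mul_le ((δ u : W) * w₁) x₁
  have a6 : cs.length ((δ u : W) * w₁) = cs.length z + cs.length p := by
    rw [ez, length_mul_parab cs hz hp]
  have a7 := cs.length_mul_le (δ u : W) w₁
  refine ⟨by omega, fun h => heq (by omega)⟩

lemma unique (hδ : MapsSimples cs J J' δ) {w₁ w₂ : W} (h₁ : IsMinRep cs J w₁)
    (h₂ : IsMinRep cs J w₂) (u : parab cs J) {x₁ x₂ : W}
    (hx₁ : x₁ ∈ parab cs (Iset cs J J' δ w₁)) (hx₂ : x₂ ∈ parab cs (Iset cs J J' δ w₂))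
    (e : (δ u : W) * w₁ * x₁ = w₂ * x₂ * u) : w₂ = w₁ := by
  classical
  have h : ∃ n, ∃ u : parab cs J, ∃ x₁ ∈ parab cs (Iset cs J J' δ w₁),
      ∃ x₂ ∈ parab cs (Iset cs J J' δ w₂),
      (δ u : W) * w₁ * x₁ = w₂ * x₂ * u ∧ cs.length (u : W) = n :=
    ⟨_, u, x₁, hx₁, x₂, hx₂, e, rfl⟩
  obtain ⟨u, x₁, hx₁, x₂, hx₂, e, hn⟩ := Nat.find_spec h
  have hu₁ : IsMinRep cs (Iset cs J J' δ w₁) (u : W) := by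
    intro v hv
    obtain ⟨hvJ, v', hv', ev⟩ := Iset_conj cs J J' δ w₁ v hv
    rw [hn]
    refine Nat.find_min' h ⟨u * ⟨v, hvJ⟩, v'⁻¹ * x₁ * v, Subgroup.mul_mem _
      (Subgroup.mul_mem _ (Subgroup.inv_mem _ hv') hx₁) hv, x₂, hx₂, ?_, rfl⟩
    rw [map_mul, Subgroup.coe_mul, Subgroup.coe_mul, mul_assoc _ _ w₁, ev, ← mul_assoc _ (u : W), ← e]
    simp [mul_assoc]
  have hu₂ : IsMinRep cs (Iset cs J J' δ w₂) (u : W)⁻¹ := by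
    intro v hv
    obtain ⟨hvJ, v', hv', ev⟩ := Iset_conj cs J J' δ w₂ v⁻¹ (Subgroup.inv_mem _ hv)
    rw [cs.length_inv, hn, ← cs.length_inv, mul_inv_rev, inv_inv]
    refine Nat.find_min' h ⟨⟨v⁻¹, hvJ⟩ * u, x₁, hx₁, v' * x₂ * v, Subgroup.mul_mem _
      (Subgroup.mul_mem _ hv' hx₂) hv, ?_, rfl⟩
    rw [map_mul, Subgroup.coe_mul, Subgroup.coe_mul, mul_assoc, mul_assoc, ← mul_assoc _ w₁, e,
      ← mul_assoc, ← mul_assoc, ev]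
    simp [mul_assoc]
  have hI₁ := (Iset_special cs J J' δ w₁).1
  have hI₂ := (Iset_special cs J J' δ w₂).1
  obtain ⟨k1, k2⟩ := key cs J J' δ hδ h₁ h₂ hI₁ hI₂ u hx₁ hx₂ e hu₁ hu₂
  obtain ⟨k3, _⟩ := key cs J J' δ hδ h₂ h₁ hI₂ hI₁ u⁻¹ hx₂ hx₁
    (by
      rw [map_inv, Subgroup.coe_inv, Subgroup.coe_inv, eq_mul_inv_iff_mul_eq, mul_assoc, mul_assoc,
        ← mul_assoc w₂, ← e]
      simp [mul_assoc])
    (by simpa using hu₂) (by simpa using hu₁)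
  exact k2 k3

/-! ### Existence -/

lemma toRel_orbit {w v : W} (h : ToRel cs J J' δ w v) :
    ∃ u : parab cs J, v = (δ u : W) * w * (u : W)⁻¹ := by
  unfold ToRel at h
  induction h with
  | refl => exact ⟨1, by simp⟩
  | tail _ h ih =>
    obtain ⟨u, rfl⟩ := ih
    obtain ⟨i, hi, rfl, _⟩ := h
    exact ⟨sJ cs J i hi * u, by simp [sJ, mul_assoc]⟩

lemma exist (hδ : MapsSimples cs J J' δ) (w : W) :
    ∃ y x, IsMinRep cs J y ∧ x ∈ parab cs (Iset cs J J' δ y) ∧ ToRel cs J J' δ w (y * x) := by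
  classical
  have h : ∃ n, ∃ (y : W) (ω : List B), IsMinRep cs J y ∧ (∀ i ∈ ω, i ∈ J) ∧ ω.length = n ∧
      ToRel cs J J' δ w (y * cs.wordProd ω) := by
    obtain ⟨y, b, hy, hb, rfl⟩ := exists_decomp cs J w
    obtain ⟨ω, hω, rfl⟩ := parab_word cs hb
    exact ⟨_, y, ω, hy, hω, rfl, Relation.ReflTransGen.refl⟩
  obtain ⟨y, ω₀, hy, hω₀, hl₀, hr₀⟩ := Nat.find_spec h
  set n := Nat.find h with hn
  have hmin : ∀ (z : W) (ω : List B), IsMinRep cs J z → (∀ i ∈ ω, i ∈ J) →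
      ToRel cs J J' δ w (z * cs.wordProd ω) → n ≤ ω.length :=
    fun z ω h1 h2 h3 => Nat.find_min' h ⟨z, ω, h1, h2, rfl, h3⟩
  let Good : List B → Prop := fun ω => (∀ i ∈ ω, i ∈ J) ∧ ω.length = n ∧
    ToRel cs J J' δ w (y * cs.wordProd ω)
  have step : ∀ (ω : List B) (i : B), Good (ω ++ [i]) → ∃ hi : i ∈ J, ∃ k,
      (δ (sJ cs J i hi) : W) * y = y * cs.simple k ∧ Good (k :: ω) := by
    rintro ω i ⟨g1, g2, g3⟩
    have hi : i ∈ J := g1 i (by simp)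
    have hω : ∀ j ∈ ω, j ∈ J := fun j hj => g1 j (by simp [hj])
    refine ⟨hi, ?_⟩
    obtain ⟨i', _, hi'⟩ := hδ.1 i hi
    have hJm : JMin cs J (ω ++ [i]) := by
      refine ⟨g1, fun η h1 h2 => ?_⟩
      rw [g2]
      exact hmin y η hy h1 (by rw [h2]; exact g3)
    have hlen := JMin_length cs hy _ hJm
    have hrel : ToRel cs J J' δ w ((δ (sJ cs J i hi) : W) * y * cs.wordProd ω) := by
      refine Relation.ReflTransGen.tail g3 ⟨i, hi, ?_, ?_⟩
      · simp [cs.wordProd_append, mul_assoc]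
      · rw [hlen, hi', mul_assoc]
        have h1 := cs.length_mul_le (cs.simple i') (y * cs.wordProd ω)
        have h2 := cs.length_mul_le y (cs.wordProd ω)
        have h3 := cs.length_wordProd_le ω
        rw [cs.length_simple] at h1
        simp only [List.length_append, List.length_singleton]
        omega
    rw [hi'] at hrel ⊢
    rcases deodhar cs hy i' with hd | ⟨k, hk, hd⟩
    · exfalso
      have := hmin _ ω hd hω hrel
      simp at g2
      omega
    · refine ⟨k, hd, ?_, ?_, ?_⟩
      · intro j hj
        rcases List.mem_cons.1 hj with rfl | hj
        · exact hk
        · exact hω j hj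
      · simpa using g2
      · rw [cs.wordProd_cons, ← mul_assoc, ← hd]; exact hrel
  let K : Set B := {j | ∃ ω, Good ω ∧ j ∈ ω}
  have hK1 : ∀ j ∈ K, ∃ hj : j ∈ J, ∃ k ∈ K, (δ (sJ cs J j hj) : W) * y = y * cs.simple k := by
    rintro j ⟨ω, hg, hj⟩
    obtain ⟨a, c, rfl⟩ := List.append_of_mem hj
    clear hj
    induction c using List.reverseRecOn generalizing a with
    | nil =>
      obtain ⟨hi, k, e, hg'⟩ := step a j hg
      exact ⟨hi, k, ⟨_, hg', by simp⟩, e⟩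
    | append_singleton c i ih =>
      obtain ⟨_, k, _, hg'⟩ := step (a ++ j :: c) i (by simpa using hg)
      exact ih (k :: a) (by simpa using hg')
  have hKs : WSpecial cs J J' δ y K := by
    refine ⟨fun j hj => (hK1 j hj).1, ?_⟩
    intro k hk
    obtain ⟨x, ⟨j, hj, rfl⟩, hx, e⟩ := rel_surj (T := cs.simple '' K) (Set.toFinite _)
      (fun x x' => ∃ hx : x ∈ parab cs J, (δ ⟨x, hx⟩ : W) * y = y * x')
      (by
        rintro x ⟨j, hj, rfl⟩
        obtain ⟨hjJ, k, hk, e⟩ := hK1 j hj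
        exact ⟨_, ⟨k, hk, rfl⟩, simple_mem cs hjJ, e⟩)
      (by
        rintro x - x' - z ⟨hx, h1⟩ ⟨hx', h2⟩
        rw [← h2, mul_left_inj] at h1
        exact congrArg Subtype.val (δ.injective (Subtype.ext h1)))
      (cs.simple k) ⟨k, hk, rfl⟩
    refine ⟨j, (hK1 j hj).1, hj, ?_⟩
    rw [← e]
    simp [sJ]
  refine ⟨y, cs.wordProd ω₀, hy, ?_, hr₀⟩
  apply word_mem
  intro i hi
  exact ⟨K, hKs, ω₀, ⟨hω₀, hl₀, hr₀⟩, hi⟩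

/-- If `w' = π_{J,δ}(w)` (i.e. `w' ∈ W^J` and
`w ∈ W_J ·_δ (w' W_{I(J,w',δ)})`), then `w →_{J,δ} w' x` for some
`x ∈ W_{I(J,w',δ)}`. -/
theorem stmt4 (hδ : MapsSimples cs J J' δ) (w w' : W) (hw' : IsMinRep cs J w')
    (hproj : w ∈ orbSet cs J J' δ (coset cs J J' δ w')) :
    ∃ x ∈ parab cs (Iset cs J J' δ w'), ToRel cs J J' δ w (w' * x) := by
  obtain ⟨y, x, hy, hx, hr⟩ := exist cs J J' δ hδ w
  obtain ⟨u₁, e₁⟩ := toRel_orbit cs J J' δ hr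
  obtain ⟨u₀, v, ⟨x₀, hx₀, rfl⟩, rfl⟩ := hproj
  have hyw : y = w' := unique cs J J' δ hδ hw' hy (u₁ * u₀) hx₀ hx (by
    rw [e₁]; simp [mul_assoc])
  subst hyw
  exact ⟨x, hx, hr⟩

end PartialConjugation
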